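/- arXiv:2509.01278 — 2 statements merged into one kernel-verified Lean document; each statement's English description precedes it below -/
import Mathlib

section
/- Let σ : ℝ → (real d×d matrices) be such that σ(s) is symmetric positive definite for every s. Fix t ∈ ℝ, and suppose σ has derivative σ′ at t and the map s ↦ σ(s)⁻¹ has derivative τ′ at t. Then tr(σ′ · τ′) ≤ 0. (This is the one-directional form of ∇σ : ∇σ⁻¹ ≤ 0.) -/
open Matrix

attribute [local instance] Matrix.normedAddCommGroup Matrix.normedSpace

/-- If `σ : ℝ → Matrix` is symmetric positive definite valued, `σ` has derivative `σ'` at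
`t` and `s ↦ (σ s)⁻¹` has derivative `τ'` at `t`, then `tr (σ' * τ') ≤ 0`. -/
theorem trace_deriv_mul_deriv_inv_nonpos {d : ℕ}
    (σ : ℝ → Matrix (Fin d) (Fin d) ℝ)
    (hsymm : ∀ s, (σ s)ᵀ = σ s)
    (hpos : ∀ s, ∀ x : Fin d → ℝ, x ≠ 0 → 0 < x ⬝ᵥ (σ s) *ᵥ x)
    (t : ℝ) (σ' τ' : Matrix (Fin d) (Fin d) ℝ)
    (hσ : HasDerivAt σ σ' t)
    (hτ : HasDerivAt (fun s => (σ s)⁻¹) τ' t) :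
    (σ' * τ').trace ≤ 0 := by
  have hPD : ∀ s, (σ s).PosDef := fun s => by
    refine Matrix.PosDef.of_dotProduct_mulVec_pos ?_ ?_
    · change (σ s)ᴴ = σ s
      rw [conjTranspose_eq_transpose_of_trivial, hsymm]
    · intro x hx
      simpa using hpos s x hx
  have hσe : ∀ i j, HasDerivAt (fun s => σ s i j) (σ' i j) t := fun i j =>
    hasDerivAt_pi.1 (hasDerivAt_pi.1 hσ i) j
  have hτe : ∀ i j, HasDerivAt (fun s => (σ s)⁻¹ i j) (τ' i j) t := fun i j =>
    hasDerivAt_pi.1 (hasDerivAt_pi.1 hτ i) j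
  have hσ's : σ'ᵀ = σ' := by
    ext i j
    have h1 := hσe j i
    have h2 : (fun s => σ s j i) = fun s => σ s i j := by
      funext s
      exact congrFun (congrFun (hsymm s) i) j
    rw [h2] at h1
    exact h1.unique (hσe i j)
  have hdet : ∀ s, IsUnit (σ s).det := fun s => (isUnit_iff_isUnit_det _).1 (hPD s).isUnit
  have hprod : σ' * (σ t)⁻¹ + σ t * τ' = 0 := by
    ext i j
    have h1 : HasDerivAt (fun s => ∑ k, σ s i k * (σ s)⁻¹ k j)
        (∑ k, (σ' i k * (σ t)⁻¹ k j + σ t i k * τ' k j)) t :=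
      HasDerivAt.fun_sum fun k _ => (hσe i k).mul (hτe k j)
    have h2 : (fun s => ∑ k, σ s i k * (σ s)⁻¹ k j) =
        fun _ => (1 : Matrix (Fin d) (Fin d) ℝ) i j := by
      funext s
      rw [← mul_nonsing_inv _ (hdet s), mul_apply]
    rw [h2] at h1
    have h3 := h1.unique (hasDerivAt_const t _)
    rw [Finset.sum_add_distrib] at h3
    simpa [mul_apply] using h3
  have hτ' : τ' = -((σ t)⁻¹ * σ' * (σ t)⁻¹) := by
    have h := congrArg (fun M => (σ t)⁻¹ * M) hprod
    simp only [mul_add, mul_zero, nonsing_inv_mul_cancel_left _ _ (hdet t)] at h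
    rw [← mul_assoc] at h
    exact eq_neg_of_add_eq_zero_right h
  obtain ⟨C, hC⟩ : ∃ C : Matrix (Fin d) (Fin d) ℝ, (σ t)⁻¹ = Cᵀ * C := by
    open scoped MatrixOrder in
    obtain ⟨C, hC⟩ := CStarAlgebra.nonneg_iff_eq_star_mul_self.1 (hPD t).inv.posSemidef.nonneg
    exact ⟨C, by simpa [star_eq_conjTranspose] using hC⟩
  have hM : 0 ≤ ((C * σ' * Cᵀ) * (C * σ' * Cᵀ)ᴴ).trace :=
    (posSemidef_self_mul_conjTranspose _).trace_nonneg
  have hH : (C * σ' * Cᵀ)ᴴ = C * σ' * Cᵀ := by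
    rw [conjTranspose_eq_transpose_of_trivial]
    simp [transpose_mul, hσ's, mul_assoc]
  rw [hH] at hM
  have e : (σ' * τ').trace = -((C * σ' * Cᵀ) * (C * σ' * Cᵀ)).trace := by
    have h4 : σ' * τ' = -((σ' * Cᵀ * C * σ' * Cᵀ) * C) := by
      rw [hτ', hC]
      simp only [mul_neg, mul_assoc]
    rw [h4, trace_neg, trace_mul_comm]
    simp only [mul_assoc]
  rw [e]
  linarith
end

section
/- Let M be any real 2×2 matrix and let σ be a real symmetric positive definite 2×2 matrix. Then there exist real 2×2 matrices Ω, N, B such that Ω and N are antisymmetric (Ωᵀ = −Ω, Nᵀ = −N), B is symmetric (Bᵀ = B) and commutes with σ (B σ = σ B), and M = Ω + B + N σ⁻¹. -/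
open Matrix

/-- Decomposition of an arbitrary real `2 × 2` matrix `M` relative to a symmetric positive
definite matrix `σ`: `M = Ω + B + N σ⁻¹` with `Ω, N` antisymmetric and `B` symmetric and
commuting with `σ`. -/
theorem exists_decomposition_of_posDef
    (M σ : Matrix (Fin 2) (Fin 2) ℝ)
    (hσ : σᵀ = σ) (hpos : ∀ x : Fin 2 → ℝ, x ≠ 0 → 0 < x ⬝ᵥ σ *ᵥ x) :
    ∃ Ω N B : Matrix (Fin 2) (Fin 2) ℝ,
      Ωᵀ = -Ω ∧ Nᵀ = -N ∧ Bᵀ = B ∧ B * σ = σ * B ∧ M = Ω + B + N * σ⁻¹ := by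
  obtain ⟨a, b, b', c, rfl⟩ : ∃ a b b' c : ℝ, σ = !![a, b; b', c] :=
    ⟨_, _, _, _, Matrix.eta_fin_two σ⟩
  obtain ⟨p, q, s, r, rfl⟩ : ∃ p q s r : ℝ, M = !![p, q; s, r] :=
    ⟨_, _, _, _, Matrix.eta_fin_two M⟩
  have hb : b' = b := by simpa using congrFun (congrFun hσ 0) 1
  subst b'
  have ha : 0 < a := by
    have h := hpos ![1, 0] (fun h => by simpa using congrFun h 0)
    simpa [Matrix.mulVec, dotProduct, Fin.sum_univ_two] using h
  have hd : 0 < a * c - b * b := by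
    have h := hpos ![-b, a] (fun h => ha.ne' (by simpa using congrFun h 1))
    simp [Matrix.mulVec, dotProduct, Fin.sum_univ_two] at h
    have h2 : 0 < a * (a * c - b * b) := by nlinarith
    exact (pos_iff_pos_of_mul_pos h2).1 ha
  obtain ⟨m, hm⟩ : ∃ m : ℝ, m * (4 * b ^ 2 + (a - c) ^ 2)
      = (q + s) * (a - c) - 2 * b * (p - r) := by
    by_cases hD : 4 * b ^ 2 + (a - c) ^ 2 = 0
    · have h1 : b = 0 := by nlinarith [sq_nonneg b, sq_nonneg (a - c)]
      have h2 : a - c = 0 := by nlinarith [sq_nonneg b, sq_nonneg (a - c)]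
      exact ⟨0, by rw [h1, h2]; ring⟩
    · exact ⟨_, div_mul_cancel₀ _ hD⟩
  have hinv : (!![0, m * (a * c - b * b); -(m * (a * c - b * b)), 0] : Matrix (Fin 2) (Fin 2) ℝ)
      * (!![a, b; b, c])⁻¹ = !![-(m * b), m * a; -(m * c), m * b] := by
    have hu : IsUnit (!![a, b; b, c] : Matrix (Fin 2) (Fin 2) ℝ).det := by
      rw [Matrix.det_fin_two_of]; exact hd.ne'.isUnit
    letI := Matrix.invertibleOfIsUnitDet _ hu
    rw [Matrix.mul_inv_eq_iff_eq_mul_of_invertible]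
    ext i j
    fin_cases i <;> fin_cases j <;> simp [Matrix.mul_apply, Fin.sum_univ_two] <;> ring
  refine ⟨!![0, (q - s) / 2 - m * (a + c) / 2; -((q - s) / 2 - m * (a + c) / 2), 0],
    !![0, m * (a * c - b * b); -(m * (a * c - b * b)), 0],
    !![p + m * b, (q + s) / 2 - m * (a - c) / 2; (q + s) / 2 - m * (a - c) / 2, r - m * b],
    ?_, ?_, ?_, ?_, ?_⟩
  · ext i j
    fin_cases i <;> fin_cases j <;> simp
  · ext i j
    fin_cases i <;> fin_cases j <;> simp
  · ext i j
    fin_cases i <;> fin_cases j <;> simp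
  · ext i j
    fin_cases i <;> fin_cases j <;> simp [Matrix.mul_apply, Fin.sum_univ_two] <;>
      first | ring1 | linarith
  · rw [hinv]
    ext i j
    fin_cases i <;> fin_cases j <;> simp <;> ring
end
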